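/- Let R_G := {p ∈ G : key(OP(p)) < key(p)}. If p₁, p₂ ∈ R_G and p₁ ≠ p₂, then CP(p₁) ≠ CP(p₂). -/

import Mathlib

open Finset

attribute [local instance] Classical.propDecidable

/-- A point in the plane: first coordinate is the key, second is the time. -/
abbrev Pt : Type := ℤ × ℤ

/-- `r` lies in the closed axis-parallel rectangle with opposite corners `p` and `q`. -/
def inRect (p q r : Pt) : Prop :=
  min p.1 q.1 ≤ r.1 ∧ r.1 ≤ max p.1 q.1 ∧ min p.2 q.2 ≤ r.2 ∧ r.2 ≤ max p.2 q.2

/-- `r` lies in the open axis-parallel rectangle with opposite corners `p` and `q`. -/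
def inOpenRect (p q r : Pt) : Prop :=
  min p.1 q.1 < r.1 ∧ r.1 < max p.1 q.1 ∧ min p.2 q.2 < r.2 ∧ r.2 < max p.2 q.2

/-- `S` is an arborally satisfied set. -/
def ArbSat (S : Finset Pt) : Prop :=
  ∀ p ∈ S, ∀ q ∈ S, p.1 = q.1 ∨ p.2 = q.2 ∨ ∃ r ∈ S, r ≠ p ∧ r ≠ q ∧ inRect p q r

/-- `X` is the permutation point set `{(σ(t), t) : 1 ≤ t ≤ n}` of some permutation `σ` of
`{1, …, n}`. -/
def IsPermPointSet (n : ℕ) (X : Finset Pt) : Prop :=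
  ∃ σ : Equiv.Perm (Fin n),
    X = Finset.univ.image (fun t : Fin n => ((((σ t : ℕ) : ℤ) + 1, ((t : ℕ) : ℤ) + 1) : Pt))

/-- The points added by GREEDY at time `t`, given the point set `X` and the set `G` of points
added before time `t`: for the point `p` of `X` with time `t` and each point `q` of time `< t`
with a different key such that the rectangle spanned by `p` and `q` contains no other point of
time `< t`, the point `(key q, t)` is added. -/
noncomputable def greedyStep (X G : Finset Pt) (t : ℤ) : Finset Pt :=
  (X.filter (fun p => p.2 = t)).biUnion (fun p =>
    (((X ∪ G).filter (fun s => s.2 < t)).filter (fun q =>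
      q.1 ≠ p.1 ∧ ∀ r ∈ (X ∪ G).filter (fun s => s.2 < t), inRect p q r → r = q)).image
      (fun q => ((q.1, t) : Pt)))

/-- All points added by GREEDY while processing times `1, …, t`. -/
noncomputable def greedyUpTo (X : Finset Pt) : ℕ → Finset Pt
  | 0 => ∅
  | t + 1 => greedyUpTo X t ∪ greedyStep X (greedyUpTo X t) ((t : ℤ) + 1)

/-- The set `G` of points added by GREEDY over the whole execution on a permutation point set
`X` of size `n`. -/
noncomputable def greedyG (n : ℕ) (X : Finset Pt) : Finset Pt := greedyUpTo X n

/-- `OP r` is the point of `X` processed at the time at which `r` was added; for `r ∈ X`,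
`OP r = r`. -/
noncomputable def OP (X : Finset Pt) (r : Pt) : Pt :=
  ((X.filter (fun p => p.2 = r.2)).toList).headI

/-- The first point of `S` above `p`: the point of `S` with the same key as `p`, smaller time,
and the largest such time. -/
noncomputable def firstAbove (S : Finset Pt) (p : Pt) : Pt :=
  (p.1, (((S.filter (fun q => q.1 = p.1 ∧ q.2 < p.2)).image Prod.snd).max).unbotD 0)

/-- The pair `CP(p) = (OP(p), OP(q))` where `q` is the first point of `X ∪ G` above `p`. -/
noncomputable def CP (X G : Finset Pt) (p : Pt) : Pt × Pt :=
  (OP X p, OP X (firstAbove (X ∪ G) p))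

/-- `CP(p) ∈ MMC` (*zig*). -/
def inMMC (X G : Finset Pt) (p : Pt) : Prop :=
  ((CP X G p).1.1 < p.1 ∧ (CP X G p).2.1 < (CP X G p).1.1 ∧ (CP X G p).2.2 < (CP X G p).1.2)
  ∨ (p.1 < (CP X G p).1.1 ∧ (CP X G p).1.1 < (CP X G p).2.1 ∧ (CP X G p).2.2 < (CP X G p).1.2)

/-- `CP(p) ∈ MFC` (*zag*). -/
def inMFC (X G : Finset Pt) (p : Pt) : Prop :=
  ((CP X G p).1.1 < p.1 ∧ p.1 ≤ (CP X G p).2.1 ∧ (CP X G p).2.2 < p.2)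
  ∨ (p.1 < (CP X G p).1.1 ∧ (CP X G p).2.1 ≤ p.1 ∧ (CP X G p).2.2 < p.2)

/-- A pair is good if no point of `X` lies in the open rectangle spanned by it. -/
def IsGoodPair (X : Finset Pt) (pr : Pt × Pt) : Prop :=
  ∀ r ∈ X, ¬ inOpenRect pr.1 pr.2 r

/-- `B` is a block of `X`: the set of points of `X` whose times lie in some interval, whose
keys form a set of consecutive integers; blocks are nonempty. -/
def IsBlock (X B : Finset Pt) : Prop :=
  B.Nonempty ∧ (∃ i j : ℤ, B = X.filter (fun p => i ≤ p.2 ∧ p.2 ≤ j)) ∧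
    ∃ c d : ℤ, B.image Prod.fst = Finset.Icc c d

/-- `Top(B)`: the point of `B` with the smallest time. -/
noncomputable def TopPt (B : Finset Pt) : Pt :=
  ((B.filter (fun p => ∀ q ∈ B, p.2 ≤ q.2)).toList).headI

/-- A decomposition tree of `X`: a rooted tree whose nodes are blocks of `X`, whose root is
`X`, whose leaves are exactly the singleton blocks, and in which the children of every
internal node partition it. -/
structure DecompTree (X : Finset Pt) where
  nodes : Finset (Finset Pt)
  parent : Finset Pt → Finset Pt
  isBlock_nodes : ∀ B ∈ nodes, IsBlock X B
  root_mem : X ∈ nodes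
  parent_mem : ∀ B ∈ nodes, B ≠ X → parent B ∈ nodes
  ssubset_parent : ∀ B ∈ nodes, B ≠ X → B ⊂ parent B
  leaf_iff : ∀ B ∈ nodes, (¬ ∃ C ∈ nodes, C ≠ X ∧ parent C = B) ↔ B.card = 1
  children_partition : ∀ B ∈ nodes, B.card ≠ 1 →
    ∀ x ∈ B, ∃! C, C ∈ nodes ∧ C ≠ X ∧ parent C = B ∧ x ∈ C

/-- The children of a node `B` in a decomposition tree. -/
noncomputable def DecompTree.children {X : Finset Pt} (T : DecompTree X) (B : Finset Pt) :
    Finset (Finset Pt) :=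
  T.nodes.filter (fun C => C ≠ X ∧ T.parent C = B)

/-- `X` is `k`-decomposable: it admits a decomposition tree in which every node has at most
`k` children. -/
def kDecomposable (k : ℕ) (X : Finset Pt) : Prop :=
  ∃ T : DecompTree X, ∀ B ∈ T.nodes, (T.children B).card ≤ k

/-- `RT(p)`: the node of the decomposition tree closest to the root (i.e. containing all
others) among the nodes `B` with `Top(B) = p`. -/
noncomputable def RT {X : Finset Pt} (T : DecompTree X) (p : Pt) : Finset Pt :=
  (((T.nodes.filter (fun B => TopPt B = p)).filter
      (fun B => ∀ C ∈ T.nodes, TopPt C = p → C ⊆ B)).toList).headI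

/-- The points added by GREEDY (`G`) while processing `Top(B)` that lie to the left of
`Top(B)`. -/
noncomputable def leftSet (G B : Finset Pt) : Finset Pt :=
  G.filter (fun s => s.2 = (TopPt B).2 ∧ s.1 < (TopPt B).1)

/-- `Left(B)`: among the points added by GREEDY while processing `Top(B)` with key less than
`key (Top B)`, the one with the largest key (junk if none exists). -/
noncomputable def leftPt (G B : Finset Pt) : Pt :=
  (((leftSet G B).filter (fun s => ∀ r ∈ leftSet G B, r.1 ≤ s.1)).toList).headI

/-- The points added by GREEDY (`G`) while processing `Top(B)` that lie to the right of
`Top(B)`. -/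
noncomputable def rightSet (G B : Finset Pt) : Finset Pt :=
  G.filter (fun s => s.2 = (TopPt B).2 ∧ (TopPt B).1 < s.1)

/-- `Right(B)`: among the points added by GREEDY while processing `Top(B)` with key greater
than `key (Top B)`, the one with the smallest key (junk if none exists). -/
noncomputable def rightPt (G B : Finset Pt) : Pt :=
  (((rightSet G B).filter (fun s => ∀ r ∈ rightSet G B, s.1 ≤ r.1)).toList).headI

/-- The points of a permutation point set are determined by their times. -/
theorem IsPermPointSet.eq_of_time_eq {n : ℕ} {X : Finset Pt} (hX : IsPermPointSet n X)
    {a b : Pt} (ha : a ∈ X) (hb : b ∈ X) (h : a.2 = b.2) : a = b := by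
  obtain ⟨σ, rfl⟩ := hX
  simp only [Finset.mem_image, Finset.mem_univ, true_and] at ha hb
  obtain ⟨s, rfl⟩ := ha
  obtain ⟨t, rfl⟩ := hb
  have hst : s = t := Fin.ext (by simpa using h)
  rw [hst]

theorem OP_mem_and_time {X : Finset Pt} {r x : Pt} (hx : x ∈ X) (hxr : x.2 = r.2) :
    OP X r ∈ X ∧ (OP X r).2 = r.2 := by
  have hmem : x ∈ (X.filter (fun p => p.2 = r.2)).toList := by simp [hx, hxr]
  have hhead : OP X r ∈ (X.filter (fun p => p.2 = r.2)).toList := by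
    unfold OP
    cases hl : (X.filter (fun p => p.2 = r.2)).toList with
    | nil => simp [hl] at hmem
    | cons a l => simp
  simpa using hhead

theorem mem_greedyStep {X G : Finset Pt} {t : ℤ} {p : Pt} :
    p ∈ greedyStep X G t ↔ ∃ x ∈ X, x.2 = t ∧ ∃ q ∈ X ∪ G, q.2 < t ∧ q.1 ≠ x.1 ∧
      (∀ r ∈ X ∪ G, r.2 < t → inRect x q r → r = q) ∧ p = (q.1, t) := by
  simp only [greedyStep, Finset.mem_biUnion, Finset.mem_image, Finset.mem_filter]
  constructor
  · rintro ⟨x, ⟨hx, hxt⟩, q, ⟨⟨hq, hqt⟩, hne, hempty⟩, rfl⟩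
    exact ⟨x, hx, hxt, q, hq, hqt, hne, fun r hr hrt => hempty r ⟨hr, hrt⟩, rfl⟩
  · rintro ⟨x, hx, hxt, q, hq, hqt, hne, hempty, rfl⟩
    exact ⟨x, ⟨hx, hxt⟩, q, ⟨⟨hq, hqt⟩, hne, fun r hr => hempty r hr.1 hr.2⟩, rfl⟩

theorem greedyUpTo_mono (X : Finset Pt) : Monotone (greedyUpTo X) :=
  monotone_nat_of_le_succ fun _ => Finset.subset_union_left

/-- Points with time at most `t` are added no later than in step `t`. -/
theorem mem_greedyUpTo_of_time_lt {X : Finset Pt} {r : Pt} {t n : ℕ}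
    (hr : r ∈ greedyUpTo X n) (hrt : r.2 < (t : ℤ) + 1) : r ∈ greedyUpTo X t := by
  induction n with
  | zero => simp [greedyUpTo] at hr
  | succ m ih =>
    rcases Finset.mem_union.1 hr with h | h
    · exact ih h
    · obtain ⟨_, _, _, _, _, _, _, _, rfl⟩ := mem_greedyStep.1 h
      have hmt : m + 1 ≤ t := by simp only at hrt; omega
      exact greedyUpTo_mono X hmt hr

/-- Every point `p` added by GREEDY is witnessed by the point `x ∈ X` being processed and a
point `q` above `p` such that the rectangle of `x` and `q` contains no other earlier point. -/
theorem exists_empty_rect_of_mem_greedyUpTo {X : Finset Pt} {n : ℕ} {p : Pt}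
    (hp : p ∈ greedyUpTo X n) :
    ∃ x ∈ X, x.2 = p.2 ∧ ∃ q ∈ X ∪ greedyUpTo X n, q.1 = p.1 ∧ q.2 < p.2 ∧
      ∀ r ∈ X ∪ greedyUpTo X n, r.2 < p.2 → inRect x q r → r = q := by
  obtain ⟨m, hmn, hm⟩ : ∃ m, m ≤ n ∧ p ∈ greedyStep X (greedyUpTo X m) ((m : ℤ) + 1) := by
    induction n with
    | zero => simp [greedyUpTo] at hp
    | succ k ih =>
      rcases Finset.mem_union.1 hp with h | h
      · obtain ⟨m, hmk, hm⟩ := ih h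
        exact ⟨m, by omega, hm⟩
      · exact ⟨k, by omega, h⟩
  obtain ⟨x, hx, hxt, q, hq, hqt, -, hempty, rfl⟩ := mem_greedyStep.1 hm
  refine ⟨x, hx, hxt, q, Finset.union_subset_union_right (greedyUpTo_mono X hmn) hq, rfl, hqt,
    fun r hr hrt => hempty r ?_ hrt⟩
  rcases Finset.mem_union.1 hr with h | h
  · exact Finset.mem_union_left _ h
  · exact Finset.mem_union_right _ (mem_greedyUpTo_of_time_lt h hrt)

/-- If some point of `S` lies above `p`, then `firstAbove S p` is the latest such point. -/
theorem firstAbove_spec {S : Finset Pt} {p q : Pt} (hq : q ∈ S) (hk : q.1 = p.1)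
    (ht : q.2 < p.2) :
    firstAbove S p ∈ S ∧ (firstAbove S p).2 < p.2 ∧ q.2 ≤ (firstAbove S p).2 := by
  set T := (S.filter (fun q => q.1 = p.1 ∧ q.2 < p.2)).image Prod.snd with hT
  have hqT : q.2 ∈ T := Finset.mem_image_of_mem _ (by simp [hq, hk, ht])
  obtain ⟨m, hm⟩ := Finset.max_of_mem hqT
  have hfa : firstAbove S p = (p.1, m) := by
    rw [firstAbove, ← hT, hm]
    rfl
  obtain ⟨s, hs, hsm⟩ := Finset.mem_image.1 (Finset.mem_of_max hm)
  obtain ⟨hsS, hsk, hst⟩ := Finset.mem_filter.1 hs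
  have hsp : s = (p.1, m) := Prod.ext hsk hsm
  rw [hfa]
  exact ⟨hsp ▸ hsS, hsm ▸ hst, Finset.le_max_of_eq hqT hm⟩

/-- Every point of `X ∪ G` has an original point of the same time. -/
theorem exists_mem_time_eq {X : Finset Pt} {n : ℕ} {p : Pt} (hp : p ∈ X ∪ greedyUpTo X n) :
    ∃ x ∈ X, x.2 = p.2 := by
  rcases Finset.mem_union.1 hp with h | h
  · exact ⟨p, h, rfl⟩
  · obtain ⟨x, hx, hxt, -⟩ := exists_empty_rect_of_mem_greedyUpTo h
    exact ⟨x, hx, hxt⟩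

/-- For `p ∈ G`, the first point `f` above `p` has the same time as its original point, and the
rectangle spanned by `OP p` and `f` contains no point earlier than `p` other than `f`. -/
theorem firstAbove_of_mem_greedyG {n : ℕ} {X : Finset Pt} (hX : IsPermPointSet n X) {p : Pt}
    (hp : p ∈ greedyG n X) :
    (OP X p).2 = p.2 ∧
    firstAbove (X ∪ greedyG n X) p ∈ X ∪ greedyG n X ∧
    (firstAbove (X ∪ greedyG n X) p).2 < p.2 ∧
    (OP X (firstAbove (X ∪ greedyG n X) p)).2 = (firstAbove (X ∪ greedyG n X) p).2 ∧
    ∀ r ∈ X ∪ greedyG n X, r.2 < p.2 →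
      inRect (OP X p) (firstAbove (X ∪ greedyG n X) p) r →
      r = firstAbove (X ∪ greedyG n X) p := by
  obtain ⟨x, hx, hxt, q, hq, hqk, hqt, hempty⟩ := exists_empty_rect_of_mem_greedyUpTo hp
  obtain ⟨hOPmem, hOPt⟩ := OP_mem_and_time hx hxt
  obtain rfl : OP X p = x := hX.eq_of_time_eq hOPmem hx (hOPt.trans hxt.symm)
  obtain ⟨hfm, hft, hqf⟩ := firstAbove_spec hq hqk hqt
  have hfk : (firstAbove (X ∪ greedyUpTo X n) p).1 = q.1 := hqk.symm
  have hfq : firstAbove (X ∪ greedyUpTo X n) p = q := by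
    refine hempty _ hfm hft ?_
    simp only [inRect, hfk]
    omega
  obtain ⟨y, hy, hyt⟩ := exists_mem_time_eq hfm
  refine ⟨hOPt, hfm, hft, (OP_mem_and_time hy hyt).2, ?_⟩
  simp only [greedyG, hfq]
  exact hempty

/-- Points of `G` right of their original point and with equal `CP` have keys in no strict
order. -/
theorem key_le_of_CP_eq {n : ℕ} {X : Finset Pt} (hX : IsPermPointSet n X) {p₁ p₂ : Pt}
    (h₁ : p₁ ∈ greedyG n X) (h₂ : p₂ ∈ greedyG n X) (hk₁ : (OP X p₁).1 < p₁.1)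
    (h : CP X (greedyG n X) p₁ = CP X (greedyG n X) p₂) : p₂.1 ≤ p₁.1 := by
  by_contra! hlt
  obtain ⟨hOP₁, hm₁, ht₁, hf₁, -⟩ := firstAbove_of_mem_greedyG hX h₁
  obtain ⟨hOP₂, -, ht₂, hf₂, hempty⟩ := firstAbove_of_mem_greedyG hX h₂
  obtain ⟨hOP, hf⟩ := Prod.mk.inj h
  rw [hf, hf₂] at hf₁
  rw [hOP] at hOP₁ hk₁
  have hkey₁ : (firstAbove (X ∪ greedyG n X) p₁).1 = p₁.1 := rfl
  have hkey₂ : (firstAbove (X ∪ greedyG n X) p₂).1 = p₂.1 := rfl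
  have heq := hempty _ hm₁ (by omega) (by simp only [inRect]; omega)
  rw [heq] at hkey₁
  omega

/-- On `R_G := {p ∈ G : key(OP(p)) < key(p)}`, the map `CP` is injective. -/
theorem cp_injective_on_right (n : ℕ) (X : Finset Pt) (hX : IsPermPointSet n X)
    (p₁ p₂ : Pt) (h₁ : p₁ ∈ greedyG n X) (h₂ : p₂ ∈ greedyG n X)
    (hk₁ : (OP X p₁).1 < p₁.1) (hk₂ : (OP X p₂).1 < p₂.1) (hne : p₁ ≠ p₂) :
    CP X (greedyG n X) p₁ ≠ CP X (greedyG n X) p₂ := by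
  intro h
  have hOP : OP X p₁ = OP X p₂ := congrArg Prod.fst h
  refine hne (Prod.ext (le_antisymm (key_le_of_CP_eq hX h₂ h₁ hk₂ h.symm)
    (key_le_of_CP_eq hX h₁ h₂ hk₁ h)) ?_)
  rw [← (firstAbove_of_mem_greedyG hX h₁).1, hOP, (firstAbove_of_mem_greedyG hX h₂).1]
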